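/- Let L be a commutative subspace lattice on H, let Φ be a rank preserving linear map on Alg L, and let M, N ∈ L with {0} ≠ N ⊆ M and M₋ ≠ H. Then: (1) if M is consistent with respect to Φ, then N is consistent with respect to Φ; (2) if M is twisted with respect to Φ, then N is twisted with respect to Φ. -/

import Mathlib

open scoped InnerProductSpace

noncomputable section

/-- The join (closed linear span) of a family of subspaces of a Hilbert space. -/
def closedJoin {H : Type*} [NormedAddCommGroup H] [InnerProductSpace ℂ H]
    (S : Set (Submodule ℂ H)) : Submodule ℂ H :=
  (sSup S).topologicalClosure

/-- A subspace lattice on `H`: a family of closed subspaces containing `{0}` and `H`,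
closed under arbitrary intersections and arbitrary closed linear spans. -/
structure IsSubspaceLattice {H : Type*} [NormedAddCommGroup H] [InnerProductSpace ℂ H]
    (L : Set (Submodule ℂ H)) : Prop where
  isClosed : ∀ E ∈ L, IsClosed (E : Set H)
  bot_mem : ⊥ ∈ L
  top_mem : ⊤ ∈ L
  sInf_mem : ∀ S : Set (Submodule ℂ H), S ⊆ L → sInf S ∈ L
  join_mem : ∀ S : Set (Submodule ℂ H), S ⊆ L → closedJoin S ∈ L

/-- `M₋`: the join of all members of `L` that do not contain `M`. -/
def minus {H : Type*} [NormedAddCommGroup H] [InnerProductSpace ℂ H]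
    (L : Set (Submodule ℂ H)) (M : Submodule ℂ H) : Submodule ℂ H :=
  closedJoin {E | E ∈ L ∧ ¬ M ≤ E}

open Classical in
/-- The orthogonal projection of `H` onto a closed subspace `E`, as an operator on `H`
(junk value `0` if `E` is not closed). -/
def projOf {H : Type*} [NormedAddCommGroup H] [InnerProductSpace ℂ H] [CompleteSpace H]
    (E : Submodule ℂ H) : H →L[ℂ] H :=
  if h : IsClosed (E : Set H) then
    haveI : CompleteSpace E := h.completeSpace_coe
    E.subtypeL.comp (Submodule.orthogonalProjectionOnto E)
  else 0

/-- A commutative subspace lattice: the orthogonal projections onto members commute. -/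
structure IsCSL {H : Type*} [NormedAddCommGroup H] [InnerProductSpace ℂ H] [CompleteSpace H]
    (L : Set (Submodule ℂ H)) extends IsSubspaceLattice L : Prop where
  commutes : ∀ E ∈ L, ∀ F ∈ L, projOf E * projOf F = projOf F * projOf E

/-- Complete distributivity of the lattice `L` (meets are intersections, joins are
closed linear spans). -/
def IsCompletelyDistributive {H : Type*} [NormedAddCommGroup H] [InnerProductSpace ℂ H]
    (L : Set (Submodule ℂ H)) : Prop :=
  ∀ (I : Type) (J : I → Type) (E : (i : I) → J i → Submodule ℂ H),
    (∀ i j, E i j ∈ L) →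
     ((⨅ i, closedJoin (Set.range (E i)))
        = closedJoin (Set.range fun φ : (∀ i, J i) => ⨅ i, E i (φ i)))
    ∧ (closedJoin (Set.range fun i => ⨅ j, E i j)
        = ⨅ φ : (∀ i, J i), closedJoin (Set.range fun i => E i (φ i)))

/-- `Alg L`: all bounded operators leaving every member of `L` invariant. -/
def algL {H : Type*} [NormedAddCommGroup H] [InnerProductSpace ℂ H]
    (L : Set (Submodule ℂ H)) : Set (H →L[ℂ] H) :=
  {T | ∀ E ∈ L, ∀ x ∈ E, T x ∈ E}

/-- The rank one operator `x ⊗ f* : h ↦ ⟨h, f⟩ x`. -/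
def rankOne {H : Type*} [NormedAddCommGroup H] [InnerProductSpace ℂ H]
    (x f : H) : H →L[ℂ] H :=
  (innerSL ℂ f).smulRight x

/-- The rank of a bounded operator: the dimension of its range. -/
def opRank {H : Type*} [NormedAddCommGroup H] [InnerProductSpace ℂ H]
    (T : H →L[ℂ] H) : Cardinal :=
  Module.rank ℂ (LinearMap.range (T : H →ₗ[ℂ] H))

/-- `Φ` is a linear map of `Alg L` into itself. -/
structure IsLinearOnAlg {H : Type*} [NormedAddCommGroup H] [InnerProductSpace ℂ H]
    (L : Set (Submodule ℂ H)) (Φ : (H →L[ℂ] H) → (H →L[ℂ] H)) : Prop where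
  maps : ∀ A ∈ algL L, Φ A ∈ algL L
  map_add : ∀ A ∈ algL L, ∀ B ∈ algL L, Φ (A + B) = Φ A + Φ B
  map_smul : ∀ (c : ℂ), ∀ A ∈ algL L, Φ (c • A) = c • Φ A

/-- `Φ` preserves the rank of every finite rank operator in `Alg L`. -/
def RankPreserving {H : Type*} [NormedAddCommGroup H] [InnerProductSpace ℂ H]
    (L : Set (Submodule ℂ H)) (Φ : (H →L[ℂ] H) → (H →L[ℂ] H)) : Prop :=
  ∀ A ∈ algL L, opRank A < Cardinal.aleph0 → opRank (Φ A) = opRank A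

/-- `a ∼ b`: (nonzero) vectors `a` and `b` are linearly dependent. -/
def Dep {H : Type*} [NormedAddCommGroup H] [InnerProductSpace ℂ H] (a b : H) : Prop :=
  ∃ c : ℂ, c ≠ 0 ∧ b = c • a

/-- `N` is consistent with respect to `Φ`. -/
def Consistent {H : Type*} [NormedAddCommGroup H] [InnerProductSpace ℂ H]
    (L : Set (Submodule ℂ H)) (Φ : (H →L[ℂ] H) → (H →L[ℂ] H))
    (N : Submodule ℂ H) : Prop :=
  N ≠ ⊥ ∧ minus L N ≠ ⊤ ∧
    ∃ (U : N →ₗ[ℂ] H) (V : ((minus L N)ᗮ : Submodule ℂ H) →ₗ[ℂ] H),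
      ∀ (x : N) (f : ((minus L N)ᗮ : Submodule ℂ H)),
        Φ (rankOne (x : H) (f : H)) = rankOne (U x) (V f)

/-- `N` is twisted with respect to `Φ`. -/
def Twisted {H : Type*} [NormedAddCommGroup H] [InnerProductSpace ℂ H]
    (L : Set (Submodule ℂ H)) (Φ : (H →L[ℂ] H) → (H →L[ℂ] H))
    (N : Submodule ℂ H) : Prop :=
  N ≠ ⊥ ∧ minus L N ≠ ⊤ ∧
    ∃ (U : ((minus L N)ᗮ : Submodule ℂ H) →ₗ⋆[ℂ] H) (V : N →ₗ⋆[ℂ] H),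
      ∀ (x : N) (f : ((minus L N)ᗮ : Submodule ℂ H)),
        Φ (rankOne (x : H) (f : H)) = rankOne (U f) (V x)

/-- `N` is isolated: `dim N = 1` and `N^⊥ ∈ L`. -/
def Isolated {H : Type*} [NormedAddCommGroup H] [InnerProductSpace ℂ H]
    (L : Set (Submodule ℂ H)) (N : Submodule ℂ H) : Prop :=
  Module.rank ℂ N = 1 ∧ Nᗮ ∈ L

/-- The family `F` of all `N ∈ L` with `N ≠ {0}` and `N₋ ≠ H`. -/
def famF {H : Type*} [NormedAddCommGroup H] [InnerProductSpace ℂ H]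
    (L : Set (Submodule ℂ H)) : Set (Submodule ℂ H) :=
  {N | N ∈ L ∧ N ≠ ⊥ ∧ minus L N ≠ ⊤}

/-- Subspaces are comparable if one contains the other. -/
def Comparable' {H : Type*} [NormedAddCommGroup H] [InnerProductSpace ℂ H]
    (M N : Submodule ℂ H) : Prop :=
  M ≤ N ∨ N ≤ M

/-- There is a chain in `F` from `M` to `N`. -/
def ChainConn {H : Type*} [NormedAddCommGroup H] [InnerProductSpace ℂ H]
    (L : Set (Submodule ℂ H)) (M N : Submodule ℂ H) : Prop :=
  ∃ (n : ℕ) (c : Fin (n + 1) → Submodule ℂ H),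
    (∀ k, c k ∈ famF L) ∧ c 0 = M ∧ c (Fin.last n) = N ∧
      ∀ k : Fin n, Comparable' (c k.castSucc) (c k.succ)

/-- `𝔊_N`: all members of `F` that can be connected to `N` by a chain. -/
def GSet {H : Type*} [NormedAddCommGroup H] [InnerProductSpace ℂ H]
    (L : Set (Submodule ℂ H)) (N : Submodule ℂ H) : Set (Submodule ℂ H) :=
  {M | M ∈ famF L ∧ ChainConn L N M}

end

/-!
Let `N < M` and fix `0 ≠ g ∈ M₋ᗮ` and `y ∈ M \ N`. If `M` is consistent then `Φ(x ⊗ g*) = Ux ⊗ w*`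
for all `x ∈ M`. For `0 ≠ x ∈ N` and `f ∈ N₋ᗮ`, both `Φ(x ⊗ f*)` and `Φ(x ⊗ f*) + Ux ⊗ w*` have
rank at most one, hence `Φ(x ⊗ f*)` is of the form `Ux ⊗ b*` or `a ⊗ w*`. In the second case
`Φ(x ⊗ f* + y ⊗ g*)` has rank at most one, and as `x`, `y` are independent, rank preservation makes
`f` a multiple of `g`; so the first form always holds. A linear map which is pointwise a multiple of
the injective map `U` is a constant multiple of it, so `b` depends on `f` only. The twisted case
exchanges the two tensor factors.
-/

section RankOne

open InnerProductSpace

variable {𝕜 E F : Type*} [RCLike 𝕜]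
  [NormedAddCommGroup E] [InnerProductSpace 𝕜 E] [NormedAddCommGroup F] [NormedSpace 𝕜 F]

theorem exists_inner_eq_zero_and_inner_ne_zero {b w : E} (h : b ∉ 𝕜 ∙ w) :
    ∃ k : E, ⟪w, k⟫_𝕜 = 0 ∧ ⟪b, k⟫_𝕜 ≠ 0 := by
  by_contra! hk
  have orthogonal_le : (𝕜 ∙ w)ᗮ ≤ (𝕜 ∙ b)ᗮ := fun k hwk =>
    Submodule.mem_orthogonal_singleton_iff_inner_right.2
      (hk k (Submodule.mem_orthogonal_singleton_iff_inner_right.1 hwk))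
  have b_mem : b ∈ (𝕜 ∙ w)ᗮᗮ :=
    Submodule.orthogonal_le orthogonal_le
      (Submodule.le_orthogonal_orthogonal _ (Submodule.mem_span_singleton_self b))
  exact h (by rwa [Submodule.orthogonal_orthogonal] at b_mem)

theorem mem_range_rankOne_add_rankOne_left {a u : F} {b w : E} (h : b ∉ 𝕜 ∙ w) :
    a ∈ LinearMap.range (rankOne 𝕜 a b + rankOne 𝕜 u w).toLinearMap := by
  obtain ⟨k, hwk, hbk⟩ := exists_inner_eq_zero_and_inner_ne_zero h
  exact ⟨(⟪b, k⟫_𝕜)⁻¹ • k, by simp [hwk, hbk]⟩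

theorem notMem_span_singleton_of_linearIndependent_pair {K V : Type*} [DivisionRing K]
    [AddCommGroup V] [Module K V] {x y : V} (h : LinearIndependent K ![x, y]) : x ∉ K ∙ y := by
  intro hx
  obtain ⟨c, hc⟩ := Submodule.mem_span_singleton.1 hx
  exact (LinearIndependent.pair_iff' (h.ne_zero 1)).1 (LinearIndependent.pair_symm_iff.1 h) c hc

theorem two_le_rank_rankOne_add_rankOne {a u : F} {b w : E} (hau : LinearIndependent 𝕜 ![a, u])
    (hbw : LinearIndependent 𝕜 ![b, w]) : 2 ≤ (rankOne 𝕜 a b + rankOne 𝕜 u w).rank := by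
  have a_mem := mem_range_rankOne_add_rankOne_left (a := a) (u := u)
    (notMem_span_singleton_of_linearIndependent_pair hbw)
  have u_mem := mem_range_rankOne_add_rankOne_left (a := u) (u := a)
    (notMem_span_singleton_of_linearIndependent_pair (LinearIndependent.pair_symm_iff.1 hbw))
  rw [add_comm] at u_mem
  have indep : LinearIndependent 𝕜 (M := (rankOne 𝕜 a b + rankOne 𝕜 u w).toLinearMap.range)
      ![⟨a, a_mem⟩, ⟨u, u_mem⟩] := by
    refine .of_comp (Submodule.subtype _) ?_
    convert hau using 1
    ext i; fin_cases i <;> rfl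
  simpa using indep.cardinal_lift_le_rank

theorem rank_rankOne_le_one (a : F) (b : E) : (rankOne 𝕜 a b).rank ≤ 1 := by
  rcases eq_or_ne a 0 with rfl | ha
  · simp
  rcases eq_or_ne b 0 with rfl | hb
  · simp
  exact (rank_rankOne ha hb).le

theorem exists_eq_rankOne_of_rank_le_one [CompleteSpace E] {T : E →L[𝕜] F} (hT : T.rank ≤ 1) :
    ∃ a b, T = rankOne 𝕜 a b := by
  obtain ⟨v, hv⟩ := (rank_submodule_le_one_iff' _).1 hT
  rcases eq_or_ne v 0 with rfl | hv0
  · exact ⟨0, 0, by ext h; simpa using hv ⟨h, rfl⟩⟩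
  obtain ⟨φ, hφ⟩ := SeparatingDual.exists_eq_one (R := 𝕜) hv0
  refine ⟨v, (toDual 𝕜 E).symm (φ ∘L T), ContinuousLinearMap.ext fun h => ?_⟩
  obtain ⟨c, hc : c • v = T h⟩ := Submodule.mem_span_singleton.1 (hv ⟨h, rfl⟩)
  simp [← hc, hφ]

theorem eq_rankOne_or_of_rank_add_rankOne_le_one [CompleteSpace E] {T : E →L[𝕜] F} {u : F} {w : E}
    (hT : T.rank ≤ 1) (hu : u ≠ 0) (hw : w ≠ 0) (h : (T + rankOne 𝕜 u w).rank ≤ 1) :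
    (∃ b, T = rankOne 𝕜 u b) ∨ ∃ a, T = rankOne 𝕜 a w := by
  obtain ⟨a, b, rfl⟩ := exists_eq_rankOne_of_rank_le_one hT
  by_cases hau : LinearIndependent 𝕜 ![u, a]
  · have hbw : ¬ LinearIndependent 𝕜 ![w, b] := fun hbw =>
      (two_le_rank_rankOne_add_rankOne (LinearIndependent.pair_symm_iff.1 hau)
        (LinearIndependent.pair_symm_iff.1 hbw)).not_gt (h.trans_lt Cardinal.one_lt_two)
    obtain ⟨c, rfl⟩ := by simpa [LinearIndependent.pair_iff' hw] using hbw
    exact .inr ⟨starRingEnd 𝕜 c • a, by simp⟩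
  · obtain ⟨c, rfl⟩ := by simpa [LinearIndependent.pair_iff' hu] using hau
    exact .inl ⟨starRingEnd 𝕜 c • b, by simp⟩

theorem rankOne_right_injective {u : F} (hu : u ≠ 0) :
    Function.Injective (rankOne 𝕜 u : E →L⋆[𝕜] E →L[𝕜] F) := by
  refine (injective_iff_map_eq_zero _).2 fun b hb => ?_
  simpa [hu] using congrArg norm hb

end RankOne

section Factorization

theorem exists_forall_eq_smul_of_forall_mem_span {K₁ K V W : Type*} [Semiring K₁] [Field K]
    {σ : K₁ →+* K} [RingHomSurjective σ] [AddCommGroup V] [Module K₁ V] [AddCommGroup W]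
    [Module K W] {A U : V →ₛₗ[σ] W} (hU : Function.Injective U) (h : ∀ x, A x ∈ K ∙ U x) :
    ∃ c : K, ∀ x, A x = c • U x := by
  rcases subsingleton_or_nontrivial V with _ | _
  · exact ⟨0, fun x => by simp [Subsingleton.elim x 0]⟩
  obtain ⟨x₀, hx₀⟩ := exists_ne (0 : V)
  obtain ⟨c, hc⟩ := Submodule.mem_span_singleton.1 (h x₀)
  refine ⟨c, fun x => ?_⟩
  obtain ⟨s, hs⟩ := Submodule.mem_span_singleton.1 (h x)
  obtain ⟨t, ht⟩ := Submodule.mem_span_singleton.1 (h (x + x₀))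
  have comparison : (s - t) • U x = (t - c) • U x₀ := by
    rw [map_add, map_add, ← hs, ← hc, smul_add] at ht
    rw [sub_smul, sub_smul, sub_eq_sub_iff_add_eq_add, ← ht, add_comm]
  by_cases hst : s = t
  · have htc : t = c := by
      simpa [hst, sub_eq_zero, (map_ne_zero_iff U hU).2 hx₀] using comparison.symm
    rw [← hs, hst, htc]
  · obtain ⟨d, hd⟩ := RingHomSurjective.is_surjective (σ := σ) ((s - t)⁻¹ * (t - c))
    have hx : x = d • x₀ := hU <| by
      rw [map_smulₛₗ, hd, mul_smul, ← comparison, inv_smul_smul₀ (sub_ne_zero.2 hst)]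
    rw [hx, map_smulₛₗ, map_smulₛₗ, ← hc, smul_comm]

theorem exists_forall_eq_rankOne {𝕜 E F G N : Type*} [RCLike 𝕜]
    [NormedAddCommGroup E] [InnerProductSpace 𝕜 E] [NormedAddCommGroup F] [NormedSpace 𝕜 F]
    [AddCommGroup G] [Module 𝕜 G] [AddCommGroup N] [Module 𝕜 N]
    {σ τ σ' : 𝕜 →+* 𝕜} [RingHomSurjective σ] [RingHomCompTriple σ' (starRingEnd 𝕜) τ]
    (D : N →ₛₗ[σ] G →ₛₗ[τ] E →L[𝕜] F) {U : N →ₛₗ[σ] F} (hU : Function.Injective U)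
    (h : ∀ x f, ∃ b, D x f = InnerProductSpace.rankOne 𝕜 (U x) b) :
    ∃ V : G →ₛₗ[σ'] E, ∀ x f, D x f = InnerProductSpace.rankOne 𝕜 (U x) (V f) := by
  rcases subsingleton_or_nontrivial N with _ | _
  · exact ⟨0, fun x f => by simp [Subsingleton.elim x 0]⟩
  obtain ⟨x₀, hx₀⟩ := exists_ne (0 : N)
  have hUx₀ : U x₀ ≠ 0 := (map_ne_zero_iff U hU).2 hx₀
  choose W hW using h x₀
  have rankOne_injective := rankOne_right_injective (𝕜 := 𝕜) (E := E) hUx₀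
  let V : G →ₛₗ[σ'] E :=
    { toFun := W
      map_add' := fun f g => rankOne_injective <| by rw [map_add, ← hW, ← hW, ← hW, map_add]
      map_smul' := fun c f => rankOne_injective <| by
        rw [map_smulₛₗ, ← hW, ← hW, map_smulₛₗ, RingHomCompTriple.comp_apply] }
  refine ⟨V, fun x f => ContinuousLinearMap.ext fun k => ?_⟩
  let evalAt : N →ₛₗ[σ] F := (ContinuousLinearMap.apply 𝕜 F k).toLinearMap ∘ₛₗ D.flip f
  obtain ⟨c, hc⟩ : ∃ c : 𝕜, ∀ x, D x f k = c • U x :=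
    exists_forall_eq_smul_of_forall_mem_span (A := evalAt) hU fun x => by
      obtain ⟨b, hb⟩ := h x f
      exact Submodule.mem_span_singleton.2 ⟨⟪b, k⟫_𝕜, by simp [evalAt, hb]⟩
  have hcW : c = ⟪W f, k⟫_𝕜 := smul_left_injective 𝕜 hUx₀ <| by
    simp only [← hc, hW, InnerProductSpace.rankOne_apply]
  rw [hc, hcW, InnerProductSpace.rankOne_apply]
  rfl

end Factorization

section AlgL

variable {H : Type*} [NormedAddCommGroup H] [InnerProductSpace ℂ H]
  {L : Set (Submodule ℂ H)} {Φ : (H →L[ℂ] H) → (H →L[ℂ] H)} {M N : Submodule ℂ H}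

theorem rankOne_eq (x f : H) : rankOne x f = InnerProductSpace.rankOne ℂ x f := rfl

theorem minus_mono (hNM : N ≤ M) : minus L N ≤ minus L M :=
  Submodule.topologicalClosure_mono
    (sSup_le_sSup fun _ hE => ⟨hE.1, fun hME => hE.2 (hNM.trans hME)⟩)

theorem le_minus {E : Submodule ℂ H} (hE : E ∈ L) (hNE : ¬ N ≤ E) : E ≤ minus L N :=
  (le_sSup (show E ∈ {E | E ∈ L ∧ ¬ N ≤ E} from ⟨hE, hNE⟩)).trans
    (Submodule.le_topologicalClosure _)

theorem exists_mem_orthogonal_minus_ne_zero [CompleteSpace H] (hM : minus L M ≠ ⊤) :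
    ∃ g ∈ (minus L M)ᗮ, g ≠ 0 := by
  refine Submodule.exists_mem_ne_zero_of_ne_bot fun hbot => hM ?_
  rw [minus, closedJoin, Submodule.orthogonal_closure] at hbot
  exact Submodule.topologicalClosure_eq_top_iff.2 hbot

theorem rankOne_mem_algL {x f : H} (hx : x ∈ N) (hf : f ∈ (minus L N)ᗮ) :
    rankOne x f ∈ algL L := by
  intro E hE h hh
  by_cases hNE : N ≤ E
  · exact E.smul_mem _ (hNE hx)
  · simp [rankOne_eq, Submodule.inner_left_of_mem_orthogonal (le_minus hE hNE hh) hf]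

theorem add_mem_algL {S T : H →L[ℂ] H} (hS : S ∈ algL L) (hT : T ∈ algL L) : S + T ∈ algL L :=
  fun E hE x hx => E.add_mem (hS E hE x hx) (hT E hE x hx)

/-- The sesquilinear map `(x, f) ↦ Φ (x ⊗ f*)` on `N × N₋ᗮ` induced by a linear map `Φ` of
`Alg L`. -/
noncomputable def IsLinearOnAlg.rankOneMap (hlin : IsLinearOnAlg L Φ) (N : Submodule ℂ H) :
    N →ₗ[ℂ] ((minus L N)ᗮ : Submodule ℂ H) →ₗ⋆[ℂ] H →L[ℂ] H :=
  have mem (x : N) (f : ((minus L N)ᗮ : Submodule ℂ H)) : rankOne (x : H) (f : H) ∈ algL L :=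
    rankOne_mem_algL x.2 f.2
  LinearMap.mk₂'ₛₗ (.id ℂ) (starRingEnd ℂ) (fun x f => Φ (rankOne (x : H) (f : H)))
    (fun x y f => by simpa [rankOne_eq] using hlin.map_add _ (mem x f) _ (mem y f))
    (fun c x f => by simpa [rankOne_eq] using hlin.map_smul c _ (mem x f))
    (fun x f g => by simpa [rankOne_eq] using hlin.map_add _ (mem x f) _ (mem x g))
    (fun c x f => by simpa [rankOne_eq] using hlin.map_smul (starRingEnd ℂ c) _ (mem x f))

theorem opRank_rankOne_le_one (x f : H) : opRank (rankOne x f) ≤ 1 :=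
  rank_rankOne_le_one x f

theorem opRank_add_le (S T : H →L[ℂ] H) : opRank (S + T) ≤ opRank S + opRank T :=
  LinearMap.rank_add_le S.toLinearMap T.toLinearMap

theorem opRank_eq_zero_iff {T : H →L[ℂ] H} : opRank T = 0 ↔ T = 0 := by
  rw [opRank, Submodule.rank_eq_zero, LinearMap.range_eq_bot]
  exact ContinuousLinearMap.coe_inj (g := 0)

theorem RankPreserving.opRank_map_rankOne (hrank : RankPreserving L Φ) {x f : H}
    (hxf : rankOne x f ∈ algL L) : opRank (Φ (rankOne x f)) = opRank (rankOne x f) :=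
  hrank _ hxf ((opRank_rankOne_le_one x f).trans_lt Cardinal.one_lt_aleph0)

theorem RankPreserving.opRank_map_rankOne_add_map_rankOne (hrank : RankPreserving L Φ)
    (hlin : IsLinearOnAlg L Φ) {x f y g : H} (hxf : rankOne x f ∈ algL L)
    (hyg : rankOne y g ∈ algL L) :
    opRank (Φ (rankOne x f) + Φ (rankOne y g)) = opRank (rankOne x f + rankOne y g) := by
  rw [← hlin.map_add _ hxf _ hyg]
  refine hrank _ (add_mem_algL hxf hyg) ((opRank_add_le _ _).trans_lt ?_)
  exact Cardinal.add_lt_aleph0 ((opRank_rankOne_le_one x f).trans_lt Cardinal.one_lt_aleph0)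
    ((opRank_rankOne_le_one y g).trans_lt Cardinal.one_lt_aleph0)

theorem RankPreserving.map_rankOne_eq_zero_iff (hrank : RankPreserving L Φ) {x f : H}
    (hxf : rankOne x f ∈ algL L) : Φ (rankOne x f) = 0 ↔ x = 0 ∨ f = 0 := by
  rw [← opRank_eq_zero_iff, hrank.opRank_map_rankOne hxf, opRank_eq_zero_iff, rankOne_eq,
    InnerProductSpace.rankOne_eq_zero]

theorem RankPreserving.exists_map_rankOne_eq_rankOne_or [CompleteSpace H]
    (hrank : RankPreserving L Φ) (hlin : IsLinearOnAlg L Φ) {x f g u w : H}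
    (hxf : rankOne x f ∈ algL L) (hxg : rankOne x g ∈ algL L) (hg : g ≠ 0)
    (hΦ : Φ (rankOne x g) = rankOne u w) :
    (∃ b, Φ (rankOne x f) = rankOne u b) ∨ ∃ a, Φ (rankOne x f) = rankOne a w := by
  rcases eq_or_ne x 0 with rfl | hx
  · refine .inl ⟨0, ?_⟩
    rw [(hrank.map_rankOne_eq_zero_iff hxf).2 (.inl rfl), rankOne_eq, map_zero]
  have huw : ¬ (u = 0 ∨ w = 0) := by
    rw [← InnerProductSpace.rankOne_eq_zero (𝕜 := ℂ), ← rankOne_eq, ← hΦ,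
      hrank.map_rankOne_eq_zero_iff hxg]
    exact not_or_intro hx hg
  have rank_le : opRank (Φ (rankOne x f)) ≤ 1 :=
    (hrank.opRank_map_rankOne hxf).trans_le (opRank_rankOne_le_one x f)
  have rank_add_le : opRank (Φ (rankOne x f) + rankOne u w) ≤ 1 := by
    rw [← hΦ, hrank.opRank_map_rankOne_add_map_rankOne hlin hxf hxg, rankOne_eq, rankOne_eq,
      ← map_add]
    exact opRank_rankOne_le_one x (f + g)
  exact eq_rankOne_or_of_rank_add_rankOne_le_one rank_le (not_or.1 huw).1 (not_or.1 huw).2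
    rank_add_le

theorem RankPreserving.exists_map_rankOne_eq_smul (hrank : RankPreserving L Φ)
    (hlin : IsLinearOnAlg L Φ) {x f y g : H} (hxf : rankOne x f ∈ algL L)
    (hxg : rankOne x g ∈ algL L) (hyg : rankOne y g ∈ algL L) (hg : g ≠ 0) (hy : y ∉ ℂ ∙ x)
    (hle : opRank (Φ (rankOne x f) + Φ (rankOne y g)) ≤ 1) :
    ∃ c : ℂ, Φ (rankOne x f) = c • Φ (rankOne x g) := by
  rcases eq_or_ne x 0 with rfl | hx
  · exact ⟨0, by rw [zero_smul, hrank.map_rankOne_eq_zero_iff hxf]; exact .inl rfl⟩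
  rw [hrank.opRank_map_rankOne_add_map_rankOne hlin hxf hyg] at hle
  have hxy : LinearIndependent ℂ ![x, y] :=
    (LinearIndependent.pair_iff' hx).2 fun c hc => hy (Submodule.mem_span_singleton.2 ⟨c, hc⟩)
  have hgf : ¬ LinearIndependent ℂ ![g, f] := fun hgf =>
    (two_le_rank_rankOne_add_rankOne hxy (LinearIndependent.pair_symm_iff.1 hgf)).not_gt
      (hle.trans_lt Cardinal.one_lt_two)
  obtain ⟨c, rfl⟩ := by simpa [LinearIndependent.pair_iff' hg] using hgf
  refine ⟨starRingEnd ℂ c, ?_⟩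
  rw [← hlin.map_smul _ _ hxg, rankOne_eq, rankOne_eq, map_smulₛₗ]

theorem RankPreserving.exists_map_rankOne_eq_rankOne_left [CompleteSpace H]
    (hrank : RankPreserving L Φ) (hlin : IsLinearOnAlg L Φ) {x f y g u v w : H}
    (hxf : rankOne x f ∈ algL L) (hxg : rankOne x g ∈ algL L) (hyg : rankOne y g ∈ algL L)
    (hg : g ≠ 0) (hy : y ∉ ℂ ∙ x) (hΦx : Φ (rankOne x g) = rankOne u w)
    (hΦy : Φ (rankOne y g) = rankOne v w) : ∃ b, Φ (rankOne x f) = rankOne u b := by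
  rcases hrank.exists_map_rankOne_eq_rankOne_or hlin hxf hxg hg hΦx with h | ⟨a, ha⟩
  · exact h
  have rank_le : opRank (Φ (rankOne x f) + Φ (rankOne y g)) ≤ 1 := by
    rw [ha, hΦy, rankOne_eq, rankOne_eq, ← add_apply, ← map_add]
    exact opRank_rankOne_le_one (a + v) w
  obtain ⟨c, hc⟩ := hrank.exists_map_rankOne_eq_smul hlin hxf hxg hyg hg hy rank_le
  exact ⟨starRingEnd ℂ c • w, by rw [hc, hΦx]; simp [rankOne_eq]⟩

theorem RankPreserving.exists_map_rankOne_eq_rankOne_right [CompleteSpace H]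
    (hrank : RankPreserving L Φ) (hlin : IsLinearOnAlg L Φ) {x f y g u v w : H}
    (hxf : rankOne x f ∈ algL L) (hxg : rankOne x g ∈ algL L) (hyg : rankOne y g ∈ algL L)
    (hg : g ≠ 0) (hy : y ∉ ℂ ∙ x) (hΦx : Φ (rankOne x g) = rankOne u w)
    (hΦy : Φ (rankOne y g) = rankOne u v) : ∃ a, Φ (rankOne x f) = rankOne a w := by
  rcases hrank.exists_map_rankOne_eq_rankOne_or hlin hxf hxg hg hΦx with ⟨b, hb⟩ | h
  · have rank_le : opRank (Φ (rankOne x f) + Φ (rankOne y g)) ≤ 1 := by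
      rw [hb, hΦy, rankOne_eq, rankOne_eq, ← map_add]
      exact opRank_rankOne_le_one u (b + v)
    obtain ⟨c, hc⟩ := hrank.exists_map_rankOne_eq_smul hlin hxf hxg hyg hg hy rank_le
    exact ⟨c • u, by rw [hc, hΦx]; simp [rankOne_eq]⟩
  · exact h

theorem Consistent.of_le [CompleteSpace H] (hM : Consistent L Φ M) (hlin : IsLinearOnAlg L Φ)
    (hrank : RankPreserving L Φ) (hN : N ≠ ⊥) (hNM : N ≤ M) : Consistent L Φ N := by
  rcases hNM.eq_or_lt with rfl | hlt
  · exact hM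
  obtain ⟨-, hMtop, U, V, hUV⟩ := hM
  obtain ⟨y, hyM, hyN⟩ := SetLike.exists_of_lt hlt
  obtain ⟨g, hgM, hg⟩ := exists_mem_orthogonal_minus_ne_zero hMtop
  have hU : Function.Injective U := (injective_iff_map_eq_zero U).2 fun x hx => by
    have hΦ : Φ (rankOne (x : H) g) = 0 := by
      rw [hUV x ⟨g, hgM⟩, hx, rankOne_eq, map_zero, zero_apply]
    simpa [hg] using (hrank.map_rankOne_eq_zero_iff (rankOne_mem_algL x.2 hgM)).1 hΦ
  have exists_rankOne (x : N) (f : ((minus L N)ᗮ : Submodule ℂ H)) :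
      ∃ b, Φ (rankOne (x : H) (f : H)) = rankOne (U (Submodule.inclusion hNM x)) b :=
    hrank.exists_map_rankOne_eq_rankOne_left hlin (rankOne_mem_algL x.2 f.2)
      (rankOne_mem_algL (hNM x.2) hgM) (rankOne_mem_algL hyM hgM) hg
      (fun hy => hyN ((Submodule.span_singleton_le_iff_mem _ _).2 x.2 hy))
      (hUV (Submodule.inclusion hNM x) ⟨g, hgM⟩) (hUV ⟨y, hyM⟩ ⟨g, hgM⟩)
  obtain ⟨W, hW⟩ := exists_forall_eq_rankOne (σ' := .id ℂ) (hlin.rankOneMap N)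
    (U := U ∘ₗ Submodule.inclusion hNM) (hU.comp (Submodule.inclusion_injective hNM)) exists_rankOne
  exact ⟨hN, ne_top_of_le_ne_top hMtop (minus_mono hNM), U ∘ₗ Submodule.inclusion hNM, W, hW⟩

theorem Twisted.of_le [CompleteSpace H] (hM : Twisted L Φ M) (hlin : IsLinearOnAlg L Φ)
    (hrank : RankPreserving L Φ) (hN : N ≠ ⊥) (hNM : N ≤ M) : Twisted L Φ N := by
  rcases hNM.eq_or_lt with rfl | hlt
  · exact hM
  obtain ⟨-, hMtop, U, V, hUV⟩ := hM
  obtain ⟨y, hyM, hyN⟩ := SetLike.exists_of_lt hlt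
  obtain ⟨g, hgM, hg⟩ := exists_mem_orthogonal_minus_ne_zero hMtop
  have hV : Function.Injective V := (injective_iff_map_eq_zero V).2 fun x hx => by
    have hΦ : Φ (rankOne (x : H) g) = 0 := by
      rw [hUV x ⟨g, hgM⟩, hx, rankOne_eq, map_zero]
    simpa [hg] using (hrank.map_rankOne_eq_zero_iff (rankOne_mem_algL x.2 hgM)).1 hΦ
  have exists_rankOne (x : N) (f : ((minus L N)ᗮ : Submodule ℂ H)) :
      ∃ a, Φ (rankOne (x : H) (f : H)) = rankOne a (V (Submodule.inclusion hNM x)) :=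
    hrank.exists_map_rankOne_eq_rankOne_right hlin (rankOne_mem_algL x.2 f.2)
      (rankOne_mem_algL (hNM x.2) hgM) (rankOne_mem_algL hyM hgM) hg
      (fun hy => hyN ((Submodule.span_singleton_le_iff_mem _ _).2 x.2 hy))
      (hUV (Submodule.inclusion hNM x) ⟨g, hgM⟩) (hUV ⟨y, hyM⟩ ⟨g, hgM⟩)
  let adjointMap := (hlin.rankOneMap N).compr₂ₛₗ
    (ContinuousLinearMap.adjoint (𝕜 := ℂ) (E := H) (F := H)).toLinearEquiv.toLinearMap
  obtain ⟨W, hW⟩ := exists_forall_eq_rankOne (σ' := starRingEnd ℂ) adjointMap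
    (U := V ∘ₛₗ Submodule.inclusion hNM) (hV.comp (Submodule.inclusion_injective hNM)) fun x f =>
      (exists_rankOne x f).imp fun _ ha =>
        (congrArg ContinuousLinearMap.adjoint ha).trans (InnerProductSpace.adjoint_rankOne _ _)
  refine ⟨hN, ne_top_of_le_ne_top hMtop (minus_mono hNM), W, V ∘ₛₗ Submodule.inclusion hNM,
    fun x f => ContinuousLinearMap.adjoint.injective ?_⟩
  exact (hW x f).trans (InnerProductSpace.adjoint_rankOne _ _).symm

end AlgL

theorem stmt_7_general {H : Type*} [NormedAddCommGroup H] [InnerProductSpace ℂ H]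
    [CompleteSpace H] (L : Set (Submodule ℂ H))
    (Φ : (H →L[ℂ] H) → (H →L[ℂ] H)) (hlin : IsLinearOnAlg L Φ) (hrank : RankPreserving L Φ)
    (M N : Submodule ℂ H) (hN0 : N ≠ ⊥) (hNM : N ≤ M) :
    (Consistent L Φ M → Consistent L Φ N) ∧ (Twisted L Φ M → Twisted L Φ N) :=
  ⟨fun hM => hM.of_le hlin hrank hN0 hNM, fun hM => hM.of_le hlin hrank hN0 hNM⟩

theorem stmt_7 {H : Type*} [NormedAddCommGroup H] [InnerProductSpace ℂ H]
    [CompleteSpace H] [TopologicalSpace.SeparableSpace H]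
    (L : Set (Submodule ℂ H)) (hL : IsCSL L)
    (Φ : (H →L[ℂ] H) → (H →L[ℂ] H)) (hlin : IsLinearOnAlg L Φ)
    (hrank : RankPreserving L Φ)
    (M N : Submodule ℂ H) (hM : M ∈ L) (hN : N ∈ L)
    (hN0 : N ≠ ⊥) (hNM : N ≤ M) (hMm : minus L M ≠ ⊤) :
    (Consistent L Φ M → Consistent L Φ N) ∧ (Twisted L Φ M → Twisted L Φ N) :=
  stmt_7_general L Φ hlin hrank M N hN0 hNM
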